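/- Consider cliques in Γ_0, i.e. sets of pairwise orthogonal roots. (i) Every maximal clique in Γ_0 has size 8; there are no maximal cliques of smaller size. (ii) There are exactly 3628800 cliques of size 5, exactly 3628800 cliques of size 6, exactly 2073600 cliques of size 7, and exactly 518400 cliques of size 8. (iii) For each n ∈ {5,6,7,8}, the Weyl group W acts transitively on the set of cliques of size n in Γ_0. -/

import Mathlib

noncomputable section

/-- The standard dot product on ℝ^8. -/
def dot (a b : Fin 8 → ℝ) : ℝ := ∑ i, a i * b i

/-- Membership in the E8 lattice Λ: all coordinates are integers or all lie in ℤ + 1/2,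
and the coordinates sum to an even integer. -/
def inLambda (a : Fin 8 → ℝ) : Prop :=
  ((∀ i, ∃ n : ℤ, a i = n) ∨ (∀ i, ∃ n : ℤ, a i = n + 1 / 2)) ∧
    ∃ n : ℤ, (∑ i, a i) = 2 * n

/-- The E8 root system E: lattice vectors of squared norm 2. -/
def isRoot (a : Fin 8 → ℝ) : Prop := inLambda a ∧ dot a a = 2

/-- The Weyl group W: linear isometries of ℝ^8 mapping the root system E onto itself. -/
def IsWeyl (w : (Fin 8 → ℝ) ≃ₗ[ℝ] (Fin 8 → ℝ)) : Prop :=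
  (∀ a b : Fin 8 → ℝ, dot (w a) (w b) = dot a b) ∧
    (⇑w '' {a | isRoot a} = {a | isRoot a})

/-- A clique in the colored graph `Γ_c`: a set of roots whose pairwise dot products
lie in the color set `c`. -/
def IsClique (c : Set ℝ) (K : Finset (Fin 8 → ℝ)) : Prop :=
  (∀ e ∈ K, isRoot e) ∧ ∀ e ∈ K, ∀ f ∈ K, e ≠ f → dot e f ∈ c

/-- A maximal clique in `Γ_c`: a clique not properly contained in another clique. -/
def IsMaxClique (c : Set ℝ) (K : Finset (Fin 8 → ℝ)) : Prop :=
  IsClique c K ∧ ∀ K' : Finset (Fin 8 → ℝ), IsClique c K' → K ⊆ K' → K' = K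


/-! ### Computational model: doubled coordinates as lists of integers -/

def gen : ℕ → ℕ → List (List ℤ)
  | 0, 0 => [[]]
  | 0, _ + 1 => []
  | k + 1, 0 => (gen k 0).map (fun l => 0 :: l)
  | k + 1, b + 1 => (gen k (b + 1)).map (fun l => 0 :: l) ++
      ((gen k b).map (fun l => 2 :: l) ++ (gen k b).map (fun l => (-2) :: l))

def signs : ℕ → List (List ℤ)
  | 0 => [[]]
  | k + 1 => (signs k).map (fun l => 1 :: l) ++ (signs k).map (fun l => (-1) :: l)

def EL : List (List ℤ) := gen 8 2 ++ (signs 8).filter (fun l => l.sum % 4 == 0)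

def idot : List ℤ → List ℤ → ℤ
  | a :: l, b :: m => a * b + idot l m
  | _, _ => 0

def toR (l : List ℤ) : Fin 8 → ℝ := fun i => (l.getD i 0 : ℝ) / 2

def compL (K : List (List ℤ)) : List (List ℤ) :=
  EL.filter (fun x => K.all (fun e => idot x e == 0))

def irefl (r x : List ℤ) : List ℤ :=
  List.zipWith (fun a b => a - idot x r / 4 * b) x r

def word (w : List (List ℤ)) (K : List (List ℤ)) : List (List ℤ) :=
  w.foldl (fun K r => K.map (irefl r)) K

def sameL (K K' : List (List ℤ)) : Bool :=
  K.all (fun x => decide (x ∈ K')) && K'.all (fun x => decide (x ∈ K))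

def swapOK (S : List (List ℤ)) (T : List (List ℤ)) (r : List ℤ) : Bool :=
  T.all (fun x => S.any (fun y => idot y r == 4 && (idot x y == 4 || idot x y == -4)))

def wordsOK (ws : List (List (List ℤ))) (K T : List (List ℤ)) : Bool :=
  (compL K).all (fun q => ws.any (fun w => sameL (word w (q :: K)) T))

def v1 : List ℤ := [2, 2, 0, 0, 0, 0, 0, 0]
def v2 : List ℤ := [2, -2, 0, 0, 0, 0, 0, 0]
def v3 : List ℤ := [0, 0, 2, 2, 0, 0, 0, 0]
def v4 : List ℤ := [0, 0, 2, -2, 0, 0, 0, 0]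
def v5 : List ℤ := [0, 0, 0, 0, 2, 2, 0, 0]
def v6 : List ℤ := [0, 0, 0, 0, 2, -2, 0, 0]
def v7 : List ℤ := [0, 0, 0, 0, 0, 0, 2, 2]
def v8 : List ℤ := [0, 0, 0, 0, 0, 0, 2, -2]

def s0 : List (List ℤ) := []
def s1 : List (List ℤ) := [v1]
def s2 : List (List ℤ) := [v2, v1]
def s3 : List (List ℤ) := [v3, v2, v1]
def s4 : List (List ℤ) := [v4, v3, v2, v1]
def s5 : List (List ℤ) := [v5, v4, v3, v2, v1]
def s6 : List (List ℤ) := [v6, v5, v4, v3, v2, v1]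
def s7 : List (List ℤ) := [v7, v6, v5, v4, v3, v2, v1]
def s8 : List (List ℤ) := [v8, v7, v6, v5, v4, v3, v2, v1]

def ws5 : List (List (List ℤ)) := [[], [v4],
  [[0, 0, 2, 0, -2, 0, 0, 0], [0, 0, 0, 2, 0, -2, 0, 0]],
  [[0, 0, 2, 0, 0, -2, 0, 0], [0, 0, 0, 2, -2, 0, 0, 0]],
  [[1, -1, 1, -1, -1, -1, -1, -1], [1, -1, -1, 1, -1, -1, 1, 1]],
  [[1, 1, 1, -1, -1, -1, -1, 1], [1, 1, -1, 1, -1, -1, 1, -1]],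
  [[1, 1, 1, -1, -1, -1, 1, -1], [1, 1, -1, 1, -1, -1, -1, 1]],
  [[1, -1, 1, -1, -1, -1, 1, 1], [1, -1, -1, 1, -1, -1, -1, -1]]]
def ws6 : List (List (List ℤ)) := [[], [v6],
  [[1, 1, -1, 1, 1, -1, -1, -1], [1, 1, -1, 1, -1, 1, 1, 1]],
  [[1, 1, -1, -1, 1, -1, -1, 1], [1, 1, -1, -1, -1, 1, 1, -1]],
  [[1, 1, -1, -1, 1, -1, 1, -1], [1, 1, -1, -1, -1, 1, -1, 1]],
  [[1, 1, -1, 1, 1, -1, 1, 1], [1, 1, -1, 1, -1, 1, -1, -1]]]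
def ws7 : List (List (List ℤ)) := [[], [v7],
  [[0, 2, 0, 0, 0, 0, 0, 2], [0, 2, 0, 0, 0, 0, 0, -2]],
  [[0, 2, 0, 0, 0, 0, 2, 0], [0, 2, 0, 0, 0, 0, -2, 0]]]
def ws8 : List (List (List ℤ)) := [[], [v8]]

set_option maxRecDepth 100000

theorem EL_nodup : EL.Nodup := by decide +kernel
theorem EL_len : ∀ l ∈ EL, l.length = 8 := by decide +kernel
theorem EL_norm : ∀ l ∈ EL, idot l l = 8 := by decide +kernel
theorem EL_par : ∀ l ∈ EL, l.sum % 4 = 0 ∧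
    ((∀ x ∈ l, x % 2 = 0) ∨ (∀ x ∈ l, x % 2 = 1)) := by decide +kernel
theorem c0 : (compL s0).length = 240 := by decide +kernel
theorem c1 : (compL s1).length = 126 := by decide +kernel
theorem c2 : (compL s2).length = 60 := by decide +kernel
theorem c3 : ((compL s3).map (fun x => (compL (x :: s3)).length)).sum = 240 := by decide +kernel
theorem c3' : (compL s3).length = 26 := by decide +kernel
theorem c4 : (compL s4).length ≠ 0 := by decide +kernel
theorem c4' : (compL (v5 :: s3)).length ≠ 0 := by decide +kernel
theorem v1m : v1 ∈ compL s0 := by decide +kernel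
theorem v2m : v2 ∈ compL s1 := by decide +kernel
theorem v3m : v3 ∈ compL s2 := by decide +kernel
theorem v5m : v5 ∈ compL s3 := by decide +kernel
theorem v5m' : v5 ∈ compL s4 := by decide +kernel
theorem c5 : (compL s5).length = 6 := by decide +kernel
theorem c6 : (compL s6).length = 4 := by decide +kernel
theorem c7 : (compL s7).length = 2 := by decide +kernel
theorem c8 : (compL s8).length = 0 := by decide +kernel
theorem sw0 : swapOK (compL s0) (compL s0) v1 = true := by decide +kernel
theorem sw1 : swapOK (compL s1) (compL s1) v2 = true := by decide +kernel
theorem sw2 : swapOK (compL s2) (compL s2) v3 = true := by decide +kernel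
theorem sw3 : swapOK (compL s3) ((compL s3).filter (fun x => idot x v4 == 0)) v5 = true := by
  decide +kernel
theorem sw4 : swapOK (compL s4) (compL s4) v5 = true := by decide +kernel
theorem sg4 : ∀ x ∈ compL s3, idot x v4 = 0 ∨ sameL (word [] (x :: s3)) s4 = true ∨
    sameL (word [v4] (x :: s3)) s4 = true := by decide +kernel
theorem w5 : wordsOK ws5 (v5 :: s3) s5 = true := by decide +kernel
theorem w6 : wordsOK ws6 s5 s6 = true := by decide +kernel
theorem w7 : wordsOK ws7 s6 s7 = true := by decide +kernel
theorem w8 : wordsOK ws8 s7 s8 = true := by decide +kernel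
theorem wsE : ∀ ws ∈ [ws5, ws6, ws7, ws8, [[], [v4]]], ∀ w ∈ ws, ∀ r ∈ w, r ∈ EL := by
  decide +kernel
theorem s8E : ∀ r ∈ s8, r ∈ EL := by decide +kernel

/-! ### Real side: dot product, lattice, reflections -/

theorem dot_eq (a b : Fin 8 → ℝ) : dot a b = a ⬝ᵥ b := rfl

theorem dot_comm' (a b : Fin 8 → ℝ) : dot a b = dot b a := by
  simp only [dot_eq, dotProduct_comm]

theorem inLambda_iff (a : Fin 8 → ℝ) : inLambda a ↔
    ∃ (n : Fin 8 → ℤ) (ε s : ℤ), (∀ i, a i = n i + ε / 2) ∧ ∑ i, n i = 2 * s := by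
  constructor
  · rintro ⟨h | h, m, hm⟩
    · choose n hn using h
      refine ⟨n, 0, m, by simpa using hn, ?_⟩
      simp only [hn] at hm
      exact_mod_cast hm
    · choose n hn using h
      refine ⟨n, 1, m - 2, by simpa using hn, ?_⟩
      simp only [hn, Finset.sum_add_distrib] at hm
      simp at hm
      have : (∑ i, (n i : ℝ)) = 2 * (m - 2) := by linarith
      exact_mod_cast this
  · rintro ⟨n, ε, s, h, hs⟩
    have hs' : (∑ i, (n i : ℝ)) = 2 * s := by exact_mod_cast hs
    refine ⟨?_, s + 2 * ε, ?_⟩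
    · obtain ⟨k, hk | hk⟩ := Int.even_or_odd' ε
      · left
        intro i
        refine ⟨n i + k, ?_⟩
        rw [h, hk]; push_cast; ring
      · right
        intro i
        refine ⟨n i + k, ?_⟩
        rw [h, hk]; push_cast; ring
    · simp only [h, Finset.sum_add_distrib, hs']
      simp
      ring

theorem dot_int {a b : Fin 8 → ℝ} (ha : inLambda a) (hb : inLambda b) :
    ∃ k : ℤ, dot a b = k := by
  rw [inLambda_iff] at ha hb
  obtain ⟨n, ε, s, h, hs⟩ := ha
  obtain ⟨m, δ, t, h', ht⟩ := hb
  have hs' : (∑ i, (n i : ℝ)) = 2 * s := by exact_mod_cast hs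
  have ht' : (∑ i, (m i : ℝ)) = 2 * t := by exact_mod_cast ht
  refine ⟨∑ i, n i * m i + δ * s + ε * t + 2 * ε * δ, ?_⟩
  have : ∀ i, a i * b i = n i * m i + δ / 2 * n i + ε / 2 * m i + ε * δ / 4 := by
    intro i; rw [h, h']; ring
  unfold dot
  simp only [this, Finset.sum_add_distrib, ← Finset.mul_sum, hs', ht']
  simp
  ring

theorem inLambda_sub_smul {a b : Fin 8 → ℝ} (ha : inLambda a) (hb : inLambda b) (k : ℤ) :
    inLambda (a - (k : ℝ) • b) := by
  rw [inLambda_iff] at *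
  obtain ⟨n, ε, s, h, hs⟩ := ha
  obtain ⟨m, δ, t, h', ht⟩ := hb
  refine ⟨fun i => n i - k * m i, ε - k * δ, s - k * t, ?_, ?_⟩
  · intro i
    simp only [Pi.sub_apply, Pi.smul_apply, smul_eq_mul, h, h']
    push_cast; ring
  · rw [Finset.sum_sub_distrib, ← Finset.mul_sum, hs, ht]; ring

def reflM (r : Fin 8 → ℝ) : (Fin 8 → ℝ) →ₗ[ℝ] (Fin 8 → ℝ) where
  toFun x := x - dot x r • r
  map_add' x y := by
    simp only [dot_eq, add_dotProduct, add_smul]; abel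
  map_smul' c x := by
    simp only [dot_eq, smul_dotProduct, smul_sub, smul_smul, RingHom.id_apply, smul_eq_mul]

theorem reflM_apply (r x : Fin 8 → ℝ) : reflM r x = x - dot x r • r := rfl

theorem reflM_invol {r : Fin 8 → ℝ} (hr : dot r r = 2) : Function.Involutive (reflM r) := by
  intro x
  simp only [reflM_apply, dot_eq, sub_dotProduct, smul_dotProduct] at *
  rw [hr]
  ext i
  simp
  ring

def reflE (r : Fin 8 → ℝ) (hr : dot r r = 2) : (Fin 8 → ℝ) ≃ₗ[ℝ] (Fin 8 → ℝ) :=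
  LinearEquiv.ofInvolutive (reflM r) (reflM_invol hr)

theorem reflE_apply (r x : Fin 8 → ℝ) (hr : dot r r = 2) : reflE r hr x = x - dot x r • r := rfl

theorem isWeyl_of {w : (Fin 8 → ℝ) ≃ₗ[ℝ] (Fin 8 → ℝ)}
    (h : ∀ a b, dot (w a) (w b) = dot a b) (h1 : ∀ a, isRoot a → isRoot (w a))
    (h2 : ∀ a, isRoot a → isRoot (w.symm a)) : IsWeyl w := by
  refine ⟨h, ?_⟩
  ext a
  constructor
  · rintro ⟨b, hb, rfl⟩
    exact h1 b hb
  · intro ha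
    exact ⟨w.symm a, h2 a ha, by simp⟩

theorem IsWeyl.root {w : (Fin 8 → ℝ) ≃ₗ[ℝ] (Fin 8 → ℝ)} (h : IsWeyl w) (a : Fin 8 → ℝ)
    (ha : isRoot a) : isRoot (w a) := by
  have : w a ∈ ⇑w '' {a | isRoot a} := ⟨a, ha, rfl⟩
  rw [h.2] at this
  exact this

theorem IsWeyl.root_symm {w : (Fin 8 → ℝ) ≃ₗ[ℝ] (Fin 8 → ℝ)} (h : IsWeyl w) (a : Fin 8 → ℝ)
    (ha : isRoot a) : isRoot (w.symm a) := by
  have : a ∈ {a | isRoot a} := ha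
  rw [← h.2] at this
  obtain ⟨b, hb, rfl⟩ := this
  simpa using hb

theorem IsWeyl.symm {w : (Fin 8 → ℝ) ≃ₗ[ℝ] (Fin 8 → ℝ)} (h : IsWeyl w) : IsWeyl w.symm := by
  refine isWeyl_of ?_ h.root_symm ?_
  · intro a b
    rw [← h.1]; simp
  · simpa using h.root

theorem IsWeyl.trans {w w' : (Fin 8 → ℝ) ≃ₗ[ℝ] (Fin 8 → ℝ)} (h : IsWeyl w) (h' : IsWeyl w') :
    IsWeyl (w.trans w') := by
  refine isWeyl_of ?_ ?_ ?_
  · intro a b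
    simp [h.1, h'.1]
  · intro a ha
    exact h'.root _ (h.root _ ha)
  · intro a ha
    exact h.root_symm _ (h'.root_symm _ ha)

theorem reflE_weyl {r : Fin 8 → ℝ} (hr : isRoot r) : IsWeyl (reflE r hr.2) := by
  have hd : ∀ a b, dot (reflE r hr.2 a) (reflE r hr.2 b) = dot a b := by
    intro a b
    have h2 := hr.2
    simp only [reflE_apply, dot_eq, sub_dotProduct, smul_dotProduct, dotProduct_sub,
      dotProduct_smul, smul_eq_mul] at *
    rw [h2, dotProduct_comm r b]; ring
  have hroot : ∀ a, isRoot a → isRoot (reflE r hr.2 a) := by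
    intro a ha
    refine ⟨?_, by rw [hd]; exact ha.2⟩
    obtain ⟨k, hk⟩ := dot_int ha.1 hr.1
    rw [reflE_apply, hk]
    exact inLambda_sub_smul ha.1 hr.1 k
  exact isWeyl_of hd hroot hroot

/-! ### Equivalence of finite sets -/

def Eqv (K K' : Finset (Fin 8 → ℝ)) : Prop :=
  ∃ w : (Fin 8 → ℝ) ≃ₗ[ℝ] (Fin 8 → ℝ), IsWeyl w ∧
    ⇑w '' (K : Set (Fin 8 → ℝ)) = (K' : Set (Fin 8 → ℝ))

theorem Eqv.refl (K : Finset (Fin 8 → ℝ)) : Eqv K K := by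
  refine ⟨LinearEquiv.refl ℝ _, isWeyl_of (fun _ _ => rfl) (fun _ h => h) (fun _ h => h), Set.image_id _⟩

theorem Eqv.symm {K K' : Finset (Fin 8 → ℝ)} (h : Eqv K K') : Eqv K' K := by
  obtain ⟨w, hw, h⟩ := h
  refine ⟨w.symm, hw.symm, ?_⟩
  rw [← h, ← Set.image_comp]
  simp

theorem Eqv.trans {K K' K'' : Finset (Fin 8 → ℝ)} (h : Eqv K K') (h' : Eqv K' K'') :
    Eqv K K'' := by
  obtain ⟨w, hw, h⟩ := h
  obtain ⟨w', hw', h'⟩ := h'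
  refine ⟨w.trans w', hw.trans hw', ?_⟩
  rw [← h', ← h, ← Set.image_comp]
  rfl

theorem eqv_swap {F : Finset (Fin 8 → ℝ)} {x y : Fin 8 → ℝ} (hx : isRoot x) (hy : isRoot y)
    (hxF : ∀ e ∈ F, dot x e = 0) (hyF : ∀ e ∈ F, dot y e = 0) (h : dot x y = 1) :
    Eqv (insert x F) (insert y F) := by
  have hr : isRoot (x - y) := by
    refine ⟨by simpa using inLambda_sub_smul hx.1 hy.1 1, ?_⟩
    have h1 := hx.2
    have h2 := hy.2
    simp only [dot_eq, sub_dotProduct, dotProduct_sub] at *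
    rw [dotProduct_comm y x, h, h1, h2]; norm_num
  refine ⟨reflE _ hr.2, reflE_weyl hr, ?_⟩
  have e1 : reflE _ hr.2 x = y := by
    rw [reflE_apply]
    have : dot x (x - y) = 1 := by
      have h1 := hx.2
      simp only [dot_eq, dotProduct_sub] at *
      rw [h, h1]; norm_num
    rw [this]; simp
  have e2 : ∀ e ∈ F, reflE _ hr.2 e = e := by
    intro e he
    rw [reflE_apply]
    have : dot e (x - y) = 0 := by
      have h1 := hxF e he
      have h2 := hyF e he
      simp only [dot_eq, dotProduct_sub] at *
      rw [dotProduct_comm e x, dotProduct_comm e y, h1, h2]; norm_num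
    rw [this]; simp
  rw [Finset.coe_insert, Finset.coe_insert, Set.image_insert_eq, e1]
  congr 1
  calc _ = id '' (F : Set (Fin 8 → ℝ)) := Set.image_congr (fun e he => e2 e he)
    _ = _ := Set.image_id _

theorem eqv_neg {F : Finset (Fin 8 → ℝ)} {x : Fin 8 → ℝ} (hx : isRoot x)
    (hxF : ∀ e ∈ F, dot x e = 0) :
    Eqv (insert x F) (insert (-x) F) := by
  refine ⟨reflE _ hx.2, reflE_weyl hx, ?_⟩
  have e1 : reflE _ hx.2 x = -x := by
    rw [reflE_apply, hx.2]; ext i; simp; ring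
  have e2 : ∀ e ∈ F, reflE _ hx.2 e = e := by
    intro e he
    rw [reflE_apply, dot_comm', hxF e he]; simp
  rw [Finset.coe_insert, Finset.coe_insert, Set.image_insert_eq, e1]
  congr 1
  calc _ = id '' (F : Set (Fin 8 → ℝ)) := Set.image_congr (fun e he => e2 e he)
    _ = _ := Set.image_id _

theorem isRoot_neg {x : Fin 8 → ℝ} (hx : isRoot x) : isRoot (-x) := by
  have := (reflE_weyl hx).root x hx
  rw [reflE_apply, hx.2] at this
  convert this using 1
  ext i; simp; ring

/-! ### The list model describes the roots -/

theorem dot_toR {a b : List ℤ} (ha : a.length = 8) (hb : b.length = 8) :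
    dot (toR a) (toR b) = idot a b / 4 := by
  match a, ha with
  | [a0, a1, a2, a3, a4, a5, a6, a7], _ =>
    match b, hb with
    | [b0, b1, b2, b3, b4, b5, b6, b7], _ =>
      simp [dot, toR, idot, Fin.sum_univ_succ]
      ring

theorem toR_inj {a b : List ℤ} (ha : a.length = 8) (hb : b.length = 8) (h : toR a = toR b) :
    a = b := by
  apply List.ext_getElem (by omega)
  intro i h1 h2
  have := congrFun h ⟨i, by omega⟩
  simp only [toR, List.getD_eq_getElem?_getD] at this
  rw [List.getElem?_eq_getElem h1, List.getElem?_eq_getElem h2] at this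
  simpa using this

theorem sum_toR {a : List ℤ} (ha : a.length = 8) : ∑ i, toR a i = a.sum / 2 := by
  match a, ha with
  | [a0, a1, a2, a3, a4, a5, a6, a7], _ =>
    simp [toR, Fin.sum_univ_succ]
    ring

theorem isRoot_toR {l : List ℤ} (h : l ∈ EL) : isRoot (toR l) := by
  have hl := EL_len l h
  obtain ⟨h4, hp⟩ := EL_par l h
  have hmem : ∀ i : Fin 8, l.getD i 0 ∈ l := by
    intro i
    rw [List.getD_eq_getElem _ _ (by omega)]
    exact List.getElem_mem _
  refine ⟨⟨?_, ?_⟩, ?_⟩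
  · refine hp.imp (fun hp i => ?_) (fun hp i => ?_)
    · have := hp _ (hmem i)
      refine ⟨l.getD i 0 / 2, ?_⟩
      have h2 : l.getD i 0 = 2 * (l.getD i 0 / 2) := by omega
      have h3 : (l.getD i 0 : ℝ) = 2 * ((l.getD i 0 / 2 : ℤ) : ℝ) := by exact_mod_cast h2
      simp only [toR]; linarith
    · have := hp _ (hmem i)
      refine ⟨l.getD i 0 / 2, ?_⟩
      have h2 : l.getD i 0 = 2 * (l.getD i 0 / 2) + 1 := by omega
      have h3 : (l.getD i 0 : ℝ) = 2 * ((l.getD i 0 / 2 : ℤ) : ℝ) + 1 := by exact_mod_cast h2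
      simp only [toR]; linarith
  · refine ⟨l.sum / 4, ?_⟩
    rw [sum_toR hl]
    have h2 : l.sum = 4 * (l.sum / 4) := by omega
    have h3 : (l.sum : ℝ) = 4 * ((l.sum / 4 : ℤ) : ℝ) := by exact_mod_cast h2
    linarith
  · rw [dot_toR hl hl, EL_norm l h]; norm_num

theorem mem_gen (l : List ℤ) : ∀ b : ℕ, b ≤ 2 → (l.map (fun x => x * x)).sum = b →
    l.map (fun x => 2 * x) ∈ gen l.length b := by
  induction l with
  | nil =>
    intro b hb h
    simp at h
    have : b = 0 := by omega
    subst this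
    simp [gen]
  | cons x l ih =>
    intro b hb h
    simp only [List.map_cons, List.sum_cons] at h
    have hnn : 0 ≤ (l.map (fun x => x * x)).sum := by
      apply List.sum_nonneg
      intro y hy
      simp only [List.mem_map] at hy
      obtain ⟨z, _, rfl⟩ := hy
      exact mul_self_nonneg z
    have h1 : x ≤ 1 := by nlinarith
    have h2 : -1 ≤ x := by nlinarith
    have h3 : x = 0 ∨ x = 1 ∨ x = -1 := by omega
    rcases h3 with rfl | rfl | rfl
    · have := ih b hb (by simpa using h)
      cases b <;> simp [gen, this]
    · cases b with
      | zero => simp at h; omega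
      | succ b =>
        have := ih b (by omega) (by push_cast at h; linarith)
        simp [gen, this]
    · cases b with
      | zero => simp at h; omega
      | succ b =>
        have := ih b (by omega) (by push_cast at h; linarith)
        simp [gen, this]

theorem mem_signs (l : List ℤ) (h : ∀ x ∈ l, x = 1 ∨ x = -1) : l ∈ signs l.length := by
  induction l with
  | nil => simp [signs]
  | cons x l ih =>
    have := ih (fun y hy => h y (by simp [hy]))
    rcases h x (by simp) with rfl | rfl <;> simp [signs, this]

theorem exists_of_isRoot {a : Fin 8 → ℝ} (h : isRoot a) : ∃ l ∈ EL, toR l = a := by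
  obtain ⟨⟨h | h, m, hm⟩, hd⟩ := h
  · choose n hn using h
    refine ⟨(List.ofFn n).map (fun x => 2 * x), ?_, ?_⟩
    · have := mem_gen (List.ofFn n) 2 le_rfl ?_
      · rw [List.length_ofFn] at this
        exact List.mem_append_left _ this
      · rw [List.map_ofFn, List.sum_ofFn]
        simp only [dot, hn] at hd
        simp only [Function.comp]
        exact_mod_cast hd
    · ext i
      fin_cases i <;> simp [toR, hn]
  · choose n hn using h
    have hd' : ∑ i, (2 * n i + 1) * (2 * n i + 1) = 8 := by
      simp only [dot, hn] at hd
      have : ∑ i, ((2 * n i + 1) * (2 * n i + 1) : ℝ) = 8 := by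
        have e : ∀ i, ((2 * n i + 1) * (2 * n i + 1) : ℝ) =
          4 * ((n i + 1 / 2) * (n i + 1 / 2)) := by intro i; ring
        simp only [e, ← Finset.mul_sum, hd]; norm_num
      exact_mod_cast this
    have hge : ∀ i ∈ Finset.univ, (1 : ℤ) ≤ (2 * n i + 1) * (2 * n i + 1) := by
      intro i _
      rcases le_or_gt 0 (n i) with h | h <;> nlinarith
    have heq := (Finset.sum_eq_sum_iff_of_le hge).1 (by rw [hd']; simp)
    refine ⟨List.ofFn (fun i => 2 * n i + 1), ?_, ?_⟩
    · have h1 := mem_signs (List.ofFn (fun i => 2 * n i + 1)) ?_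
      · rw [List.length_ofFn] at h1
        refine List.mem_append_right _ (List.mem_filter.2 ⟨h1, ?_⟩)
        rw [List.sum_ofFn]
        have : ∑ i, (2 * n i + 1) = 4 * m := by
          simp only [hn] at hm
          have : ∑ i, ((2 * n i + 1) : ℝ) = 4 * m := by
            have e : ∀ i, ((2 * n i + 1) : ℝ) = 2 * (n i + 1 / 2) := by intro i; ring
            simp only [e, ← Finset.mul_sum, hm]; ring
          exact_mod_cast this
        rw [this]
        simp
      · intro x hx
        rw [List.mem_ofFn] at hx
        obtain ⟨i, rfl⟩ := hx
        exact mul_self_eq_one_iff.1 (heq i (Finset.mem_univ i)).symm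
    · ext i
      fin_cases i <;> simp [toR, hn] <;> ring

/-! ### Finite sets of roots -/

def toS (K : List (List ℤ)) : Finset (Fin 8 → ℝ) := (K.map toR).toFinset

theorem mem_toS {K : List (List ℤ)} {a : Fin 8 → ℝ} : a ∈ toS K ↔ ∃ l ∈ K, toR l = a := by
  simp [toS]

theorem toS_cons (x : List ℤ) (K : List (List ℤ)) : toS (x :: K) = insert (toR x) (toS K) := by
  simp [toS]

theorem mem_EL {a : Fin 8 → ℝ} : a ∈ toS EL ↔ isRoot a := by
  rw [mem_toS]
  constructor
  · rintro ⟨l, hl, rfl⟩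
    exact isRoot_toR hl
  · exact exists_of_isRoot

open Classical in
def comp (K : Finset (Fin 8 → ℝ)) : Finset (Fin 8 → ℝ) :=
  (toS EL).filter (fun x => ∀ e ∈ K, dot x e = 0)

theorem mem_comp {K : Finset (Fin 8 → ℝ)} {x : Fin 8 → ℝ} :
    x ∈ comp K ↔ isRoot x ∧ ∀ e ∈ K, dot x e = 0 := by
  simp [comp, mem_EL]

open Classical in
def Cl (n : ℕ) : Finset (Finset (Fin 8 → ℝ)) :=
  ((toS EL).powersetCard n).filter (fun K => IsClique {0} K)

theorem mem_Cl {n : ℕ} {K : Finset (Fin 8 → ℝ)} : K ∈ Cl n ↔ IsClique {0} K ∧ K.card = n := by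
  simp only [Cl, Finset.mem_filter, Finset.mem_powersetCard]
  constructor
  · rintro ⟨⟨_, h⟩, h'⟩
    exact ⟨h', h⟩
  · rintro ⟨h, h'⟩
    exact ⟨⟨fun e he => mem_EL.2 (h.1 e he), h'⟩, h⟩

theorem mem_compL {K : List (List ℤ)} {x : List ℤ} :
    x ∈ compL K ↔ x ∈ EL ∧ ∀ e ∈ K, idot x e = 0 := by
  simp [compL]

theorem dot_EL {a b : List ℤ} (ha : a ∈ EL) (hb : b ∈ EL) :
    dot (toR a) (toR b) = idot a b / 4 := dot_toR (EL_len a ha) (EL_len b hb)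

theorem comp_toS {K : List (List ℤ)} (hK : ∀ e ∈ K, e ∈ EL) : comp (toS K) = toS (compL K) := by
  ext a
  rw [mem_comp, mem_toS]
  constructor
  · rintro ⟨h, h'⟩
    obtain ⟨l, hl, rfl⟩ := exists_of_isRoot h
    refine ⟨l, mem_compL.2 ⟨hl, fun e he => ?_⟩, rfl⟩
    have := h' (toR e) (mem_toS.2 ⟨e, he, rfl⟩)
    rw [dot_EL hl (hK e he)] at this
    have h2 : (idot l e : ℝ) = 0 := by linarith
    exact_mod_cast h2
  · rintro ⟨l, hl, rfl⟩
    obtain ⟨hl, h⟩ := mem_compL.1 hl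
    refine ⟨isRoot_toR hl, fun a ha => ?_⟩
    obtain ⟨e, he, rfl⟩ := mem_toS.1 ha
    rw [dot_EL hl (hK e he), h e he]; simp

theorem toR_injOn {a b : List ℤ} (ha : a ∈ EL) (hb : b ∈ EL) (h : toR a = toR b) : a = b :=
  toR_inj (EL_len a ha) (EL_len b hb) h

theorem nodup_compL (K : List (List ℤ)) : ((compL K).map toR).Nodup := by
  refine List.Nodup.map_on ?_ (EL_nodup.filter _)
  intro x hx y hy h
  exact toR_injOn (mem_compL.1 hx).1 (mem_compL.1 hy).1 h

theorem card_comp_toS {K : List (List ℤ)} (hK : ∀ e ∈ K, e ∈ EL) :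
    (comp (toS K)).card = (compL K).length := by
  rw [comp_toS hK, toS, List.toFinset_card_of_nodup (nodup_compL K), List.length_map]

theorem insert_Cl {n : ℕ} {K : Finset (Fin 8 → ℝ)} {x : Fin 8 → ℝ} (hK : K ∈ Cl n)
    (hx : x ∈ comp K) : x ∉ K ∧ insert x K ∈ Cl (n + 1) := by
  rw [mem_comp] at hx
  rw [mem_Cl] at *
  have hn : x ∉ K := by
    intro h
    have := hx.2 x h
    rw [hx.1.2] at this
    norm_num at this
  refine ⟨hn, ⟨?_, ?_⟩, by rw [Finset.card_insert_of_notMem hn, hK.2]⟩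
  · intro e he
    rcases Finset.mem_insert.1 he with rfl | he
    · exact hx.1
    · exact hK.1.1 e he
  · intro e he f hf hef
    rcases Finset.mem_insert.1 he with rfl | he' <;> rcases Finset.mem_insert.1 hf with rfl | hf'
    · exact absurd rfl hef
    · exact hx.2 f hf'
    · rw [dot_comm']; exact hx.2 e he'
    · exact hK.1.2 e he' f hf' hef

theorem erase_Cl {n : ℕ} {K : Finset (Fin 8 → ℝ)} {x : Fin 8 → ℝ} (hK : K ∈ Cl (n + 1))
    (hx : x ∈ K) : K.erase x ∈ Cl n ∧ x ∈ comp (K.erase x) := by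
  rw [mem_Cl] at *
  rw [mem_comp]
  refine ⟨⟨⟨fun e he => hK.1.1 e (Finset.mem_of_mem_erase he), fun e he f hf h =>
    hK.1.2 e (Finset.mem_of_mem_erase he) f (Finset.mem_of_mem_erase hf) h⟩, ?_⟩,
    hK.1.1 x hx, fun e he => ?_⟩
  · rw [Finset.card_erase_of_mem hx, hK.2]; rfl
  · exact hK.1.2 x hx e (Finset.mem_of_mem_erase he) (Finset.ne_of_mem_erase he).symm

theorem sum_Cl (n : ℕ) (f : Finset (Fin 8 → ℝ) → ℕ) :
    ∑ K ∈ Cl n, ∑ x ∈ comp K, f (insert x K) = (n + 1) * ∑ K ∈ Cl (n + 1), f K := by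
  have : (n + 1) * ∑ K ∈ Cl (n + 1), f K = ∑ K ∈ Cl (n + 1), ∑ x ∈ K, f K := by
    rw [Finset.mul_sum]
    refine Finset.sum_congr rfl (fun K hK => ?_)
    rw [Finset.sum_const, (mem_Cl.1 hK).2, smul_eq_mul]
  rw [this, Finset.sum_sigma', Finset.sum_sigma']
  refine Finset.sum_bij' (fun p _ => ⟨insert p.2 p.1, p.2⟩) (fun p _ => ⟨p.1.erase p.2, p.2⟩)
    ?_ ?_ ?_ ?_ ?_
  · rintro ⟨K, x⟩ h
    rw [Finset.mem_sigma] at *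
    exact ⟨(insert_Cl h.1 h.2).2, Finset.mem_insert_self _ _⟩
  · rintro ⟨K, x⟩ h
    rw [Finset.mem_sigma] at *
    exact erase_Cl h.1 h.2
  · rintro ⟨K, x⟩ h
    rw [Finset.mem_sigma] at h
    simp only
    rw [Finset.erase_insert (insert_Cl h.1 h.2).1]
  · rintro ⟨K, x⟩ h
    rw [Finset.mem_sigma] at h
    simp only
    rw [Finset.insert_erase h.2]
  · rintro ⟨K, x⟩ h
    rfl

/-! ### Invariance -/

theorem weyl_comp {w : (Fin 8 → ℝ) ≃ₗ[ℝ] (Fin 8 → ℝ)} (hw : IsWeyl w)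
    {K K' : Finset (Fin 8 → ℝ)} (h : ⇑w '' (K : Set (Fin 8 → ℝ)) = K') :
    (comp K).image w = comp K' := by
  ext a
  rw [Finset.mem_image, mem_comp]
  constructor
  · rintro ⟨b, hb, rfl⟩
    rw [mem_comp] at hb
    refine ⟨hw.root b hb.1, fun e he => ?_⟩
    have : e ∈ (K' : Set (Fin 8 → ℝ)) := he
    rw [← h] at this
    obtain ⟨c, hc, rfl⟩ := this
    rw [hw.1]
    exact hb.2 c hc
  · rintro ⟨ha, h'⟩
    refine ⟨w.symm a, mem_comp.2 ⟨hw.root_symm a ha, fun e he => ?_⟩, by simp⟩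
    rw [← hw.1, LinearEquiv.apply_symm_apply]
    apply h'
    have : w e ∈ (K' : Set (Fin 8 → ℝ)) := by rw [← h]; exact ⟨e, he, rfl⟩
    exact this

theorem weyl_insert {w : (Fin 8 → ℝ) ≃ₗ[ℝ] (Fin 8 → ℝ)} (hw : IsWeyl w)
    {K K' : Finset (Fin 8 → ℝ)} (h : ⇑w '' (K : Set (Fin 8 → ℝ)) = K') (x : Fin 8 → ℝ) :
    Eqv (insert x K) (insert (w x) K') := by
  refine ⟨w, hw, ?_⟩
  rw [Finset.coe_insert, Finset.coe_insert, Set.image_insert_eq, h]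

theorem inv_sum {f : Finset (Fin 8 → ℝ) → ℕ} (hf : ∀ K K', Eqv K K' → f K = f K')
    {K K' : Finset (Fin 8 → ℝ)} (h : Eqv K K') :
    ∑ x ∈ comp K, f (insert x K) = ∑ x ∈ comp K', f (insert x K') := by
  obtain ⟨w, hw, h⟩ := h
  rw [← weyl_comp hw h, Finset.sum_image (fun a _ b _ hab => w.injective hab)]
  exact Finset.sum_congr rfl (fun x _ => hf _ _ (weyl_insert hw h x))

theorem inv_card {K K' : Finset (Fin 8 → ℝ)} (h : Eqv K K') :
    (comp K).card = (comp K').card := by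
  have := inv_sum (f := fun _ => 1) (fun _ _ _ => rfl) h
  simpa using this

/-! ### Moves -/

theorem irefl_toR {r x : List ℤ} (hr : r ∈ EL) (hx : x ∈ EL) :
    toR (irefl r x) = reflE (toR r) (isRoot_toR hr).2 (toR x) ∧ irefl r x ∈ EL := by
  have hrl := EL_len r hr
  have hxl := EL_len x hx
  have hl : (irefl r x).length = 8 := by simp [irefl, hrl, hxl]
  have key : toR (irefl r x) = reflE (toR r) (isRoot_toR hr).2 (toR x) := by
    rw [reflE_apply]
    obtain ⟨k, hk⟩ := dot_int (isRoot_toR hx).1 (isRoot_toR hr).1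
    have h4 : idot x r / 4 = k := by
      rw [dot_EL hx hr] at hk
      have : (idot x r : ℝ) = 4 * k := by linarith
      have : idot x r = 4 * k := by exact_mod_cast this
      omega
    rw [hk]
    ext i
    have hi := i.2
    simp only [toR, irefl, h4, Pi.sub_apply, Pi.smul_apply, smul_eq_mul]
    rw [List.getD_eq_getElem _ _ (by simp [hrl, hxl]), List.getD_eq_getElem _ _ (by omega),
      List.getD_eq_getElem _ _ (by omega), List.getElem_zipWith]
    push_cast
    ring
  refine ⟨key, ?_⟩
  have hroot := (reflE_weyl (isRoot_toR hr)).root _ (isRoot_toR hx)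
  obtain ⟨l, hl', he⟩ := exists_of_isRoot hroot
  rw [← key] at he
  rw [← toR_inj (EL_len l hl') hl he]
  exact hl'

theorem eqv_word (w : List (List ℤ)) (hw : ∀ r ∈ w, r ∈ EL) : ∀ K : List (List ℤ),
    (∀ e ∈ K, e ∈ EL) → Eqv (toS K) (toS (word w K)) := by
  induction w with
  | nil => intro K _; exact Eqv.refl _
  | cons r w ih =>
    intro K hK
    have hr := hw r (by simp)
    have h1 : Eqv (toS K) (toS (K.map (irefl r))) := by
      refine ⟨_, reflE_weyl (isRoot_toR hr), ?_⟩
      ext a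
      simp only [Set.mem_image, Finset.mem_coe, mem_toS, List.mem_map]
      constructor
      · rintro ⟨_, ⟨l, hl, rfl⟩, rfl⟩
        exact ⟨_, ⟨l, hl, rfl⟩, (irefl_toR hr (hK l hl)).1⟩
      · rintro ⟨_, ⟨l, hl, rfl⟩, rfl⟩
        exact ⟨_, ⟨l, hl, rfl⟩, (irefl_toR hr (hK l hl)).1.symm⟩
    refine h1.trans (ih (fun q hq => hw q (by simp [hq])) _ ?_)
    intro e he
    obtain ⟨l, hl, rfl⟩ := List.mem_map.1 he
    exact (irefl_toR hr (hK l hl)).2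

theorem toS_same {K K' : List (List ℤ)} (h : sameL K K' = true) : toS K = toS K' := by
  simp only [sameL, Bool.and_eq_true, List.all_eq_true, decide_eq_true_eq] at h
  ext a
  rw [mem_toS, mem_toS]
  exact ⟨fun ⟨l, hl, e⟩ => ⟨l, h.1 l hl, e⟩, fun ⟨l, hl, e⟩ => ⟨l, h.2 l hl, e⟩⟩

theorem eqv_words {ws : List (List (List ℤ))} {K T : List (List ℤ)} (hK : ∀ e ∈ K, e ∈ EL)
    (hws : ∀ w ∈ ws, ∀ r ∈ w, r ∈ EL) (h : wordsOK ws K T = true) {q : List ℤ}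
    (hq : q ∈ compL K) : Eqv (toS (q :: K)) (toS T) := by
  simp only [wordsOK, List.all_eq_true, List.any_eq_true] at h
  obtain ⟨w, hw, hs⟩ := h q hq
  rw [← toS_same hs]
  refine eqv_word w (hws w hw) _ ?_
  intro e he
  rcases List.mem_cons.1 he with rfl | he
  · exact (mem_compL.1 hq).1
  · exact hK e he

theorem eqv_swapL {K : List (List ℤ)} (hK : ∀ e ∈ K, e ∈ EL) {T : List (List ℤ)} {r : List ℤ}
    (hr : r ∈ compL K) (h : swapOK (compL K) T r = true) {x : List ℤ} (hx : x ∈ compL K)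
    (hxT : x ∈ T) : Eqv (toS (x :: K)) (toS (r :: K)) := by
  simp only [swapOK, List.all_eq_true, List.any_eq_true, Bool.and_eq_true, Bool.or_eq_true,
    beq_iff_eq] at h
  obtain ⟨y, hy, hyr, hxy⟩ := h x hxT
  have hc : ∀ z ∈ compL K, toR z ∈ comp (toS K) := by
    intro z hz
    rw [comp_toS hK, mem_toS]
    exact ⟨z, hz, rfl⟩
  have hx' := mem_comp.1 (hc x hx)
  have hy' := mem_comp.1 (hc y hy)
  have hr' := mem_comp.1 (hc r hr)
  have dyr : dot (toR y) (toR r) = 1 := by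
    rw [dot_EL (mem_compL.1 hy).1 (mem_compL.1 hr).1, hyr]; norm_num
  have dxy : dot (toR x) (toR y) = idot x y / 4 :=
    dot_EL (mem_compL.1 hx).1 (mem_compL.1 hy).1
  rw [toS_cons, toS_cons]
  refine Eqv.trans ?_ (eqv_swap hy'.1 hr'.1 hy'.2 hr'.2 dyr)
  rcases hxy with hxy | hxy
  · refine eqv_swap hx'.1 hy'.1 hx'.2 hy'.2 ?_
    rw [dxy, hxy]; norm_num
  · refine (eqv_neg hx'.1 hx'.2).trans (eqv_swap (isRoot_neg hx'.1) hy'.1 ?_ hy'.2 ?_)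
    · intro e he
      have := hx'.2 e he
      rw [dot_eq] at *
      rw [neg_dotProduct, this, neg_zero]
    · rw [dot_eq, neg_dotProduct, ← dot_eq, dxy, hxy]; norm_num

/-! ### Transitivity -/

theorem ext_Cl {n : ℕ} {P : List (List ℤ) → Prop} (hP : ∀ s, P s → ∀ e ∈ s, e ∈ EL)
    (h : ∀ K ∈ Cl n, ∃ s, P s ∧ Eqv K (toS s)) :
    ∀ K ∈ Cl (n + 1), ∃ s, P s ∧ ∃ q ∈ compL s, Eqv K (toS (q :: s)) := by
  intro K hK
  have hne : K.Nonempty := by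
    rw [← Finset.card_pos, (mem_Cl.1 hK).2]; omega
  obtain ⟨x, hx⟩ := hne
  obtain ⟨h1, h2⟩ := erase_Cl hK hx
  obtain ⟨s, hs, w, hw, he⟩ := h _ h1
  refine ⟨s, hs, ?_⟩
  have h3 : w x ∈ comp (toS s) := by
    rw [← weyl_comp hw he]
    exact Finset.mem_image_of_mem _ h2
  rw [comp_toS (hP s hs), mem_toS] at h3
  obtain ⟨q, hq, hqe⟩ := h3
  refine ⟨q, hq, ?_⟩
  have := weyl_insert hw he x
  rwa [Finset.insert_erase hx, ← hqe, ← toS_cons] at this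

theorem step_Cl {n : ℕ} {s s' : List (List ℤ)} (hs : ∀ e ∈ s, e ∈ EL)
    (h : ∀ K ∈ Cl n, Eqv K (toS s)) (h' : ∀ q ∈ compL s, Eqv (toS (q :: s)) (toS s')) :
    ∀ K ∈ Cl (n + 1), Eqv K (toS s') := by
  intro K hK
  obtain ⟨_, rfl, q, hq, he⟩ := ext_Cl (P := fun t => t = s) (by rintro _ rfl; exact hs)
    (fun K hK => ⟨s, rfl, h K hK⟩) K hK
  exact he.trans (h' q hq)

theorem s7E : ∀ r ∈ s7, r ∈ EL := fun r h => s8E r (List.mem_cons_of_mem _ h)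
theorem s6E : ∀ r ∈ s6, r ∈ EL := fun r h => s7E r (List.mem_cons_of_mem _ h)
theorem s5E : ∀ r ∈ s5, r ∈ EL := fun r h => s6E r (List.mem_cons_of_mem _ h)
theorem s4E : ∀ r ∈ s4, r ∈ EL := fun r h => s5E r (List.mem_cons_of_mem _ h)
theorem s3E : ∀ r ∈ s3, r ∈ EL := fun r h => s4E r (List.mem_cons_of_mem _ h)
theorem s2E : ∀ r ∈ s2, r ∈ EL := fun r h => s3E r (List.mem_cons_of_mem _ h)
theorem s1E : ∀ r ∈ s1, r ∈ EL := fun r h => s2E r (List.mem_cons_of_mem _ h)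
theorem s0E : ∀ r ∈ s0, r ∈ EL := fun r h => s1E r (List.mem_cons_of_mem _ h)
theorem s3E' : ∀ r ∈ v5 :: s3, r ∈ EL := by
  intro r h
  rcases List.mem_cons.1 h with rfl | h
  · exact (mem_compL.1 v5m).1
  · exact s3E r h

theorem T0 : ∀ K ∈ Cl 0, Eqv K (toS s0) := by
  intro K hK
  have : K = ∅ := Finset.card_eq_zero.1 (mem_Cl.1 hK).2
  subst this
  exact Eqv.refl _

theorem T1 : ∀ K ∈ Cl 1, Eqv K (toS s1) :=
  step_Cl s0E T0 (fun _ hq => eqv_swapL s0E v1m sw0 hq hq)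
theorem T2 : ∀ K ∈ Cl 2, Eqv K (toS s2) :=
  step_Cl s1E T1 (fun _ hq => eqv_swapL s1E v2m sw1 hq hq)
theorem T3 : ∀ K ∈ Cl 3, Eqv K (toS s3) :=
  step_Cl s2E T2 (fun _ hq => eqv_swapL s2E v3m sw2 hq hq)

theorem T4 : ∀ K ∈ Cl 4, ∃ s, (s = s4 ∨ s = v5 :: s3) ∧ Eqv K (toS s) := by
  intro K hK
  obtain ⟨_, rfl, q, hq, he⟩ := ext_Cl (P := fun t => t = s3) (by rintro _ rfl; exact s3E)
    (fun K hK => ⟨s3, rfl, T3 K hK⟩) K hK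
  have hqE : ∀ e ∈ q :: s3, e ∈ EL := by
    intro e he
    rcases List.mem_cons.1 he with rfl | he
    · exact (mem_compL.1 hq).1
    · exact s3E e he
  rcases sg4 q hq with h | h | h
  · refine ⟨_, Or.inr rfl, he.trans (eqv_swapL s3E v5m sw3 hq ?_)⟩
    rw [List.mem_filter]
    exact ⟨hq, by simp [h]⟩
  · refine ⟨_, Or.inl rfl, he.trans ?_⟩
    rw [← toS_same h]
    exact eqv_word _ (wsE [[], [v4]] (by simp) _ (by simp)) _ hqE
  · refine ⟨_, Or.inl rfl, he.trans ?_⟩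
    rw [← toS_same h]
    exact eqv_word _ (wsE [[], [v4]] (by simp) _ (by simp)) _ hqE

theorem T5 : ∀ K ∈ Cl 5, Eqv K (toS s5) := by
  intro K hK
  obtain ⟨s, hs, q, hq, he⟩ := ext_Cl (by rintro _ (rfl | rfl); exacts [s4E, s3E']) T4 K hK
  rcases hs with rfl | rfl
  · exact he.trans (eqv_swapL s4E v5m' sw4 hq hq)
  · exact he.trans (eqv_words s3E' (wsE ws5 (by simp)) w5 hq)

theorem T6 : ∀ K ∈ Cl 6, Eqv K (toS s6) :=
  step_Cl s5E T5 (fun _ hq => eqv_words s5E (wsE ws6 (by simp)) w6 hq)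
theorem T7 : ∀ K ∈ Cl 7, Eqv K (toS s7) :=
  step_Cl s6E T6 (fun _ hq => eqv_words s6E (wsE ws7 (by simp)) w7 hq)
theorem T8 : ∀ K ∈ Cl 8, Eqv K (toS s8) :=
  step_Cl s7E T7 (fun _ hq => eqv_words s7E (wsE ws8 (by simp)) w8 hq)

/-! ### Counting -/

theorem comp_card {n d : ℕ} {s : List (List ℤ)} (hs : ∀ e ∈ s, e ∈ EL)
    (h : ∀ K ∈ Cl n, Eqv K (toS s)) (hd : (compL s).length = d) :
    ∀ K ∈ Cl n, (comp K).card = d := by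
  intro K hK
  rw [inv_card (h K hK), card_comp_toS hs, hd]

theorem count_step {n d m : ℕ} (hm : m = n + 1) (h : ∀ K ∈ Cl n, (comp K).card = d) :
    (Cl n).card * d = m * (Cl m).card := by
  subst hm
  have := sum_Cl n (fun _ => 1)
  simp only [Finset.sum_const, smul_eq_mul, mul_one] at this
  rw [← this, Finset.sum_congr rfl h, Finset.sum_const, smul_eq_mul]

theorem N0 : (Cl 0).card = 1 := by
  rw [Finset.card_eq_one]
  refine ⟨∅, ?_⟩
  ext K
  rw [mem_Cl, Finset.mem_singleton, Finset.card_eq_zero]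
  constructor
  · exact fun h => h.2
  · rintro rfl
    refine ⟨⟨?_, ?_⟩, rfl⟩ <;> simp

theorem N3 : (Cl 3).card = 302400 := by
  have h0 := count_step (m := 1) rfl (comp_card s0E T0 c0)
  have h1 := count_step (m := 2) rfl (comp_card s1E T1 c1)
  have h2 := count_step (m := 3) rfl (comp_card s2E T2 c2)
  have := N0
  omega

theorem sum3 : ∑ x ∈ comp (toS s3), (comp (insert x (toS s3))).card = 240 := by
  rw [comp_toS s3E, toS, List.sum_toFinset _ (nodup_compL s3), List.map_map]
  refine Eq.trans (congrArg List.sum (List.map_congr_left (fun q hq => ?_))) c3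
  simp only [Function.comp]
  have := card_comp_toS (K := q :: s3) (by
    intro e he
    rcases List.mem_cons.1 he with rfl | he
    · exact (mem_compL.1 hq).1
    · exact s3E e he)
  rw [← this, toS_cons, toS]

theorem N5 : (Cl 5).card = 3628800 := by
  have h3 := sum_Cl 3 (fun K => (comp K).card)
  have h4 := sum_Cl 4 (fun _ => 1)
  simp only [Finset.sum_const, smul_eq_mul, mul_one] at h4
  change _ = 5 * (Cl 5).card at h4
  change _ = 4 * ∑ K ∈ Cl 4, (comp K).card at h3
  have h : ∀ K ∈ Cl 3, ∑ x ∈ comp K, (comp (insert x K)).card = 240 := by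
    intro K hK
    rw [← sum3]
    exact inv_sum (f := fun K => (comp K).card) (fun _ _ h => inv_card h) (T3 K hK)
  rw [Finset.sum_congr rfl h, Finset.sum_const, smul_eq_mul, N3] at h3
  omega

theorem N6 : (Cl 6).card = 3628800 := by
  have := count_step (m := 6) rfl (comp_card s5E T5 c5)
  have := N5
  omega
theorem N7 : (Cl 7).card = 2073600 := by
  have := count_step (m := 7) rfl (comp_card s6E T6 c6)
  have := N6
  omega
theorem N8 : (Cl 8).card = 518400 := by
  have := count_step (m := 8) rfl (comp_card s7E T7 c7)
  have := N7
  omega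

theorem ncard_Cl (n : ℕ) :
    {K : Finset (Fin 8 → ℝ) | IsClique {0} K ∧ K.card = n}.ncard = (Cl n).card := by
  rw [← Set.ncard_coe_finset]
  congr 1
  ext K
  simp [mem_Cl]

theorem eqv_of_trans {n : ℕ} {s : List (List ℤ)} (h : ∀ K ∈ Cl n, Eqv K (toS s))
    {K1 K2 : Finset (Fin 8 → ℝ)} (h1 : K1 ∈ Cl n) (h2 : K2 ∈ Cl n) : Eqv K1 K2 :=
  (h K1 h1).trans (h K2 h2).symm

theorem Cl9 {K : Finset (Fin 8 → ℝ)} (h : IsClique {0} K) : K.card ≤ 8 := by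
  by_contra hc
  obtain ⟨K', hK', hc'⟩ := Finset.exists_subset_card_eq (show 9 ≤ K.card by omega)
  have h9 : K' ∈ Cl 9 :=
    mem_Cl.2 ⟨⟨fun e he => h.1 e (hK' he), fun e he f hf => h.2 e (hK' he) f (hK' hf)⟩, hc'⟩
  have := count_step (m := 9) rfl (comp_card s8E T8 c8)
  have h0 : (Cl 9).card = 0 := by omega
  rw [Finset.card_eq_zero] at h0
  rw [h0] at h9
  simp at h9

theorem comp_pos {n : ℕ} (hn : n < 8) {K : Finset (Fin 8 → ℝ)} (h : K ∈ Cl n) :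
    (comp K).card ≠ 0 := by
  interval_cases n
  · rw [comp_card s0E T0 c0 K h]; norm_num
  · rw [comp_card s1E T1 c1 K h]; norm_num
  · rw [comp_card s2E T2 c2 K h]; norm_num
  · rw [comp_card s3E T3 c3' K h]; norm_num
  · obtain ⟨s, rfl | rfl, he⟩ := T4 K h
    · rw [inv_card he, card_comp_toS s4E]; exact c4
    · rw [inv_card he, card_comp_toS s3E']; exact c4'
  · rw [comp_card s5E T5 c5 K h]; norm_num
  · rw [comp_card s6E T6 c6 K h]; norm_num
  · rw [comp_card s7E T7 c7 K h]; norm_num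

theorem max_card {K : Finset (Fin 8 → ℝ)} (h : IsMaxClique {0} K) : K.card = 8 := by
  by_contra hc
  have h8 := Cl9 h.1
  have hK : K ∈ Cl K.card := mem_Cl.2 ⟨h.1, rfl⟩
  have := comp_pos (by omega) hK
  obtain ⟨x, hx⟩ := Finset.card_pos.1 (Nat.pos_of_ne_zero this)
  obtain ⟨h1, h2⟩ := insert_Cl hK hx
  have h3 := h.2 _ (mem_Cl.1 h2).1 (Finset.subset_insert x K)
  exact h1 (h3 ▸ Finset.mem_insert_self x K)

/-- (i) Every maximal clique in `Γ_0` has size 8 (so there are no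
maximal cliques of smaller size); (ii) there are exactly 3628800 cliques of size 5,
3628800 of size 6, 2073600 of size 7, and 518400 of size 8 in `Γ_0`; (iii) for each
`n ∈ {5,6,7,8}`, the Weyl group acts transitively on the cliques of size `n` in
`Γ_0`. -/
theorem stmt_14 :
    (∀ K : Finset (Fin 8 → ℝ), IsMaxClique {0} K → K.card = 8) ∧
    ({K : Finset (Fin 8 → ℝ) | IsClique {0} K ∧ K.card = 5}.ncard = 3628800) ∧
    ({K : Finset (Fin 8 → ℝ) | IsClique {0} K ∧ K.card = 6}.ncard = 3628800) ∧
    ({K : Finset (Fin 8 → ℝ) | IsClique {0} K ∧ K.card = 7}.ncard = 2073600) ∧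
    ({K : Finset (Fin 8 → ℝ) | IsClique {0} K ∧ K.card = 8}.ncard = 518400) ∧
    (∀ n ∈ ({5, 6, 7, 8} : Set ℕ), ∀ K1 K2 : Finset (Fin 8 → ℝ),
      IsClique {0} K1 → K1.card = n → IsClique {0} K2 → K2.card = n →
      ∃ w : (Fin 8 → ℝ) ≃ₗ[ℝ] (Fin 8 → ℝ), IsWeyl w ∧
        ⇑w '' (K1 : Set (Fin 8 → ℝ)) = (K2 : Set (Fin 8 → ℝ))) := by
  refine ⟨fun K h => max_card h, ?_, ?_, ?_, ?_, ?_⟩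
  · rw [ncard_Cl, N5]
  · rw [ncard_Cl, N6]
  · rw [ncard_Cl, N7]
  · rw [ncard_Cl, N8]
  · intro n hn K1 K2 h1 e1 h2 e2
    have m1 : K1 ∈ Cl n := mem_Cl.2 ⟨h1, e1⟩
    have m2 : K2 ∈ Cl n := mem_Cl.2 ⟨h2, e2⟩
    simp only [Set.mem_insert_iff, Set.mem_singleton_iff] at hn
    rcases hn with rfl | rfl | rfl | rfl
    · exact eqv_of_trans T5 m1 m2
    · exact eqv_of_trans T6 m1 m2
    · exact eqv_of_trans T7 m1 m2
    · exact eqv_of_trans T8 m1 m2
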